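/- Let n be a natural number with prime factorisation n = p_1^{α_1} ⋯ p_t^{α_t} (the p_i distinct primes). Then every skew brace of order n is left-nilpotent if and only if p_i does not divide p_j^k − 1 for all i ≠ j and all 1 ≤ k ≤ α_j. -/

import Mathlib

/-- A skew (left) brace: a set with two group structures `(A,+)` and `(A,∘)`
(the latter written multiplicatively) satisfying
`a ∘ (b + c) = a ∘ b - a + a ∘ c`. -/
class SkewBrace (A : Type*) extends AddGroup A, Group A where
  skew_left_distrib : ∀ a b c : A, a * (b + c) = a * b - a + a * c

/-- The left series of a skew brace: `A^1 = A` (index `0` here) and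
`A^{m+1} = A ∗ A^m`, the subgroup of `(A,+)` generated by the star products
`a ∗ b = -a + a ∘ b - b` with `a ∈ A`, `b ∈ A^m`. -/
def leftSeries (A : Type*) [SkewBrace A] : ℕ → AddSubgroup A
  | 0 => ⊤
  | m + 1 => AddSubgroup.closure
      {x : A | ∃ a : A, ∃ b ∈ leftSeries A m, x = -a + a * b - b}

/-- A skew brace is left-nilpotent if `A^m = {0}` for some `m`. -/
def IsLeftNilpotent (A : Type*) [SkewBrace A] : Prop :=
  ∃ m : ℕ, leftSeries A m = ⊥

/-!
Suppose `n` satisfies the arithmetic condition and `A` has order `n`. A prime `r ≠ p` dividing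
`|Aut D|` for a `p`-group `D` of order `p ^ a` divides `p ^ k - 1` for some `1 ≤ k ≤ a`, so in any
group of order `n` all the quotients `N(D) / C(D)` with `D` a `p`-subgroup are `p`-groups. As in
Frobenius' theorem, a Sylow `p`-subgroup then controls its own fusion, and the focal subgroup
theorem gives a proper normal subgroup of `p`-power index; by induction the group is nilpotent.
Hence `(A,+)` and `(A,∘)` are nilpotent. They share their Sylow subgroups, and a Sylow
`p`-subgroup of `(A,∘)` acts trivially through `λ_a b = -a + a ∘ b` on the Sylow `q`-subgroups of
`(A,+)` for `q ≠ p`. So `(A,+) ⋊ (A,∘)` is nilpotent; as `a ∗ b` is the commutator `[a, b]` in this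
group, its lower central series contains the left series.

Conversely, if `p ∣ q ^ k - 1`, an element of order `p` in `𝔽_{q^k}ˣ` acts on `𝔽_{q^k}` without
nonzero fixed points. The skew brace whose additive group is a direct product and whose
multiplicative group is the corresponding semidirect product has a left series that never
drops below `𝔽_{q^k}`.
-/

open scoped Pointwise commutatorElement

section Sylow

variable {G : Type*} [Group G]

theorem subgroup_eq_top_of_forall_exists_sylow_le [Finite G] (H : Subgroup G)
    (h : ∀ p, p.Prime → p ∣ Nat.card G → ∃ P : Sylow p G, P ≤ H) : H = ⊤ := by
  refine Subgroup.eq_top_of_card_eq H (Nat.dvd_antisymm H.card_subgroup_dvd_card ?_)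
  rw [Nat.dvd_iff_prime_pow_dvd_dvd]
  intro p k hp hk
  obtain rfl | hk0 := eq_or_ne k 0
  · simp
  have : Fact p.Prime := ⟨hp⟩
  obtain ⟨P, hPH⟩ := h p hp ((dvd_pow_self p hk0).trans hk)
  exact (P.pow_dvd_card_of_pow_dvd_card hk).trans (Subgroup.card_dvd_of_le hPH)

theorem isNilpotent_of_iSup_eq_top_of_commute {ι : Type*} [Finite ι] (H : ι → Subgroup G)
    [∀ i, Group.IsNilpotent (H i)]
    (hcomm : Pairwise fun i j ↦ ∀ x y : G, x ∈ H i → y ∈ H j → Commute x y)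
    (htop : ⨆ i, H i = ⊤) : Group.IsNilpotent G := by
  have := Fintype.ofFinite ι
  refine Group.nilpotent_of_surjective (Subgroup.noncommPiCoprod hcomm) ?_
  rw [← MonoidHom.range_eq_top, Subgroup.noncommPiCoprod_range, htop]

theorem sylow_normal_of_isPGroup_quotient {p r : ℕ} [Fact p.Prime] [Fact r.Prime] (hrp : r ≠ p)
    [Finite G] (N : Subgroup G) [N.Normal] [Group.IsNilpotent N] (hN : IsPGroup p (G ⧸ N))
    (R : Sylow r G) : (R : Subgroup G).Normal := by
  have hRN : (R : Subgroup G) ≤ N := by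
    have hmap : Disjoint ((R : Subgroup G).map (QuotientGroup.mk' N)) ⊤ :=
      IsPGroup.disjoint_of_ne r p hrp _ _ (R.2.map _) (hN.to_subgroup ⊤)
    rw [disjoint_top, Subgroup.map_eq_bot_iff, QuotientGroup.ker_mk'] at hmap
    exact hmap
  have : (R.subtype hRN : Subgroup N).Characteristic :=
    (R.subtype hRN).characteristic_of_normal inferInstance
  rw [← Subgroup.map_subgroupOf_eq_of_le hRN, ← R.coe_subtype hRN]
  infer_instance

theorem sup_sylow_eq_top_of_isPGroup_quotient {p : ℕ} [Fact p.Prime] [Finite G] (M : Subgroup G)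
    [M.Normal] (hM : IsPGroup p (G ⧸ M)) (S : Sylow p G) : M ⊔ S = ⊤ := by
  obtain ⟨k, hk⟩ := IsPGroup.iff_card.mp hM
  rw [← Subgroup.index_eq_one]
  have hdvd : (M ⊔ S).index ∣ p ^ k := by
    rw [← hk]
    exact Subgroup.index_dvd_of_le le_sup_left
  have hcop : (p ^ k).Coprime (M ⊔ S).index :=
    (((Fact.out : p.Prime).coprime_iff_not_dvd.mpr S.not_dvd_index).pow_left k).coprime_dvd_right
      (Subgroup.index_dvd_of_le le_sup_right)
  exact Nat.eq_one_of_dvd_coprimes hcop hdvd dvd_rfl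

theorem exists_mem_smul_sylow_eq_of_isPGroup_quotient {p : ℕ} [Fact p.Prime] [Finite G]
    (M : Subgroup G) [M.Normal] (hM : IsPGroup p (G ⧸ M)) (S T : Sylow p G) :
    ∃ c ∈ M, c • S = T := by
  obtain ⟨g, rfl⟩ := MulAction.exists_smul_eq G S T
  have hg : g ∈ M ⊔ S := sup_sylow_eq_top_of_isPGroup_quotient M hM S ▸ Subgroup.mem_top g
  obtain ⟨c, hc, s, hs, rfl⟩ := Subgroup.mem_sup_of_normal_left.mp hg
  refine ⟨c, hc, ?_⟩
  rw [mul_smul, Sylow.smul_eq_iff_mem_normalizer.mpr (Subgroup.le_normalizer hs)]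

theorem lt_inf_normalizer_of_lt {P D : Subgroup G} [Group.IsNilpotent P] (hDP : D < P) :
    D < P ⊓ Subgroup.normalizer (D : Set G) := by
  have hlt : D.subgroupOf P < ⊤ :=
    lt_top_iff_ne_top.mpr fun h ↦ hDP.not_ge (Subgroup.subgroupOf_eq_top.mp h)
  have h := Group.normalizerCondition_of_isNilpotent _ hlt
  rw [← Subgroup.subgroupOf_normalizer_eq hDP.le] at h
  obtain ⟨x, hxN, hxD⟩ := SetLike.exists_of_lt h
  refine lt_of_le_not_ge (le_inf hDP.le Subgroup.le_normalizer) fun hle ↦ hxD ?_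
  exact Subgroup.mem_subgroupOf.mpr (hle ⟨x.2, hxN⟩)

end Sylow

/-- Every `p`-subgroup `D` of `G` has a `p`-group as its automizer `N(D) / C(D)`, the hypothesis of
Frobenius' normal `p`-complement theorem. The automizer is encoded as the image of `N(D)` in
`MulAut D` under conjugation. -/
def HasPGroupAutomizers (p : ℕ) (G : Type*) [Group G] : Prop :=
  ∀ D : Subgroup G, IsPGroup p D → IsPGroup p D.normalizerMonoidHom.range

theorem isPGroup_range_normalizerMonoidHom_iff {p : ℕ} {G : Type*} [Group G]
    {D : Subgroup G} :
    IsPGroup p D.normalizerMonoidHom.range ↔ ∀ g ∈ Subgroup.normalizer (D : Set G),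
      ∃ k, g ^ p ^ k ∈ Subgroup.centralizer (D : Set G) := by
  have pow_eq_one_iff (g : Subgroup.normalizer (D : Set G)) (k : ℕ) :
      D.normalizerMonoidHom.rangeRestrict g ^ p ^ k = 1 ↔
        (g : G) ^ p ^ k ∈ Subgroup.centralizer (D : Set G) := by
    rw [← map_pow, ← MonoidHom.mem_ker, MonoidHom.ker_rangeRestrict,
      Subgroup.normalizerMonoidHom_ker, Subgroup.mem_subgroupOf, Subgroup.coe_pow]
  simp only [isPGroup_iff_pow_pow_eq_one, D.normalizerMonoidHom.rangeRestrict_surjective.forall,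
    pow_eq_one_iff, Subtype.forall]

namespace HasPGroupAutomizers

variable {p : ℕ} {G : Type*} [Group G]

theorem subgroup (h : HasPGroupAutomizers p G) (K : Subgroup G) : HasPGroupAutomizers p K := by
  intro D hD
  rw [isPGroup_range_normalizerMonoidHom_iff]
  intro g hg
  have hg' : (g : G) ∈ Subgroup.normalizer ((D.map K.subtype : Subgroup G) : Set G) :=
    Subgroup.le_normalizer_map K.subtype (Subgroup.mem_map_of_mem K.subtype hg)
  obtain ⟨k, hk⟩ := isPGroup_range_normalizerMonoidHom_iff.mp (h _ (hD.map K.subtype)) g hg'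
  refine ⟨k, fun x hx ↦ Subtype.ext ?_⟩
  exact hk x (Subgroup.mem_map_of_mem K.subtype hx)

theorem isPGroup_quotient {D : Subgroup G} (h : HasPGroupAutomizers p G) (hD : IsPGroup p D) :
    IsPGroup p (Subgroup.normalizer (D : Set G) ⧸ D.normalizerMonoidHom.ker) :=
  (h D hD).of_equiv (QuotientGroup.quotientKerEquivRange _).symm

variable [Fact p.Prime] [Finite G]

theorem exists_sylow_of_le_normalizer (h : HasPGroupAutomizers p G) {D X Y : Subgroup G}
    (hD : IsPGroup p D) (hX : IsPGroup p X) (hY : IsPGroup p Y)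
    (hXN : X ≤ Subgroup.normalizer (D : Set G)) (hYN : Y ≤ Subgroup.normalizer (D : Set G)) :
    ∃ R : Sylow p G, ∃ c ∈ Subgroup.centralizer (D : Set G), X ≤ R ∧ Y ≤ (c • R : Sylow p G) := by
  obtain ⟨S, hXS⟩ := (hX.comap_subtype (K := Subgroup.normalizer (D : Set G))).exists_le_sylow
  obtain ⟨T, hYT⟩ := (hY.comap_subtype (K := Subgroup.normalizer (D : Set G))).exists_le_sylow
  obtain ⟨c, hc, rfl⟩ :=
    exists_mem_smul_sylow_eq_of_isPGroup_quotient _ (h.isPGroup_quotient hD) S T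
  rw [Subgroup.normalizerMonoidHom_ker] at hc
  obtain ⟨R, hR⟩ := S.exists_comap_subtype_eq
  refine ⟨R, c, hc, fun x hx ↦ ?_, fun y hy ↦ ?_⟩
  · have : (⟨x, hXN hx⟩ : Subgroup.normalizer (D : Set G)) ∈ (S : Subgroup _) := hXS hx
    rw [← hR] at this
    exact this
  · have : (⟨y, hYN hy⟩ : Subgroup.normalizer (D : Set G)) ∈ ((c • S : Sylow p _) : Subgroup _) :=
      hYT hy
    rw [Sylow.coe_subgroup_smul, Subgroup.mem_pointwise_smul_iff_inv_smul_mem, ← hR] at this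
    rw [Sylow.coe_subgroup_smul, Subgroup.mem_pointwise_smul_iff_inv_smul_mem]
    simpa [← map_inv, Subgroup.mem_subgroupOf] using this

theorem exists_mem_centralizer_smul_eq (h : HasPGroupAutomizers p G) {D : Subgroup G}
    {P Q : Sylow p G} (hDP : D ≤ P) (hDQ : D ≤ Q) :
    ∃ c ∈ Subgroup.centralizer (D : Set G), c • P = Q := by
  -- Downward induction on `D`, passing to the larger groups `N_P(D)` and `N_Q(D)`.
  induction D using WellFoundedGT.induction generalizing P Q with | ind D ih
  obtain hDP | hDP := hDP.eq_or_lt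
  · have hQP : Q = P := Sylow.ext (P.is_maximal' Q.isPGroup' (hDP ▸ hDQ))
    exact ⟨1, one_mem _, by rw [one_smul, hQP]⟩
  obtain hDQ | hDQ := hDQ.eq_or_lt
  · have hPQ : P = Q := Sylow.ext (Q.is_maximal' P.isPGroup' (hDQ ▸ hDP.le))
    exact ⟨1, one_mem _, by rw [one_smul, hPQ]⟩
  have hPnil : Group.IsNilpotent P := P.isPGroup'.isNilpotent
  have hQnil : Group.IsNilpotent Q := Q.isPGroup'.isNilpotent
  obtain ⟨R, c, hc, hPR, hQR⟩ := h.exists_sylow_of_le_normalizer (P.isPGroup'.to_le hDP.le)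
    P.isPGroup'.to_inf_left Q.isPGroup'.to_inf_left inf_le_right inf_le_right
  have hDX := lt_inf_normalizer_of_lt hDP
  have hDY := lt_inf_normalizer_of_lt hDQ
  obtain ⟨a, ha, hPa⟩ := ih _ hDX inf_le_left hPR
  obtain ⟨b, hb, hbQ⟩ := ih _ hDY hQR inf_le_left
  refine ⟨b * (c * a), mul_mem (Subgroup.centralizer_le hDY.le hb)
    (mul_mem hc (Subgroup.centralizer_le hDX.le ha)), ?_⟩
  rw [mul_smul, mul_smul, hPa, hbQ]

theorem exists_mem_sylow_conj_eq (h : HasPGroupAutomizers p G) (P : Sylow p G) {x u : G}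
    (hx : x ∈ P) (hux : u * x * u⁻¹ ∈ P) : ∃ w ∈ P, u * x * u⁻¹ = w * x * w⁻¹ := by
  have hzP : Subgroup.zpowers (u * x * u⁻¹) ≤ P :=
    Subgroup.zpowers_le.mpr hux
  have hzuP : Subgroup.zpowers (u * x * u⁻¹) ≤ (u • P : Sylow p G) := by
    rw [Subgroup.zpowers_le, Sylow.coe_subgroup_smul]
    exact Subgroup.smul_mem_pointwise_smul x (MulAut.conj u) _ hx
  obtain ⟨c, hc, hcu⟩ := h.exists_mem_centralizer_smul_eq hzuP hzP
  rw [← mul_smul, Sylow.smul_eq_iff_mem_normalizer] at hcu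
  have hsup := sup_sylow_eq_top_of_isPGroup_quotient _ (h.isPGroup_quotient P.isPGroup')
    (P.subtype Subgroup.le_normalizer)
  obtain ⟨z, hz, w, hw, hzw⟩ := Subgroup.mem_sup_of_normal_left.mp
    (hsup ▸ Subgroup.mem_top (⟨c * u, hcu⟩ : Subgroup.normalizer _))
  rw [Subgroup.normalizerMonoidHom_ker] at hz
  have hcomm_c : c * (u * x * u⁻¹) = u * x * u⁻¹ * c :=
    (hc _ (Subgroup.mem_zpowers _)).symm
  have hw : (w : G) ∈ P := hw
  have hcomm_z : w * x * (w : G)⁻¹ * z = z * (w * x * (w : G)⁻¹) :=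
    hz _ (mul_mem (mul_mem hw hx) (inv_mem hw))
  have hzw : (z * w : G) = c * u := congrArg Subtype.val hzw
  refine ⟨w, hw, ?_⟩
  calc u * x * u⁻¹ = c * (u * x * u⁻¹) * c⁻¹ := by rw [hcomm_c, mul_inv_cancel_right]
    _ = c * u * x * (c * u)⁻¹ := by group
    _ = z * (w * x * (w : G)⁻¹) * (z : G)⁻¹ := by rw [← hzw]; group
    _ = w * x * (w : G)⁻¹ := by rw [← hcomm_z, mul_inv_cancel_right]

theorem focalSubgroupOf_le_commutator (h : HasPGroupAutomizers p G) (P : Sylow p G) :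
    (P : Subgroup G).focalSubgroupOf ≤ commutator P := by
  rw [Subgroup.focalSubgroupOf_eq_closure, Subgroup.closure_le]
  rintro g ⟨x, hx, u, hg⟩
  have hux : u * x * u⁻¹ ∈ P := by
    have : u * x * u⁻¹ = (g : G)⁻¹ * x := by rw [hg, commutatorElement_def]; group
    rw [this]
    exact mul_mem (inv_mem g.2) hx
  obtain ⟨w, hw, hwx⟩ := h.exists_mem_sylow_conj_eq P hx hux
  have : g = ⁅(⟨x, hx⟩ : (P : Subgroup G)), ⟨w, hw⟩⁆ := by
    ext
    calc (g : G) = x * (u * x * u⁻¹)⁻¹ := by rw [hg, commutatorElement_def]; group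
      _ = ⁅x, w⁆ := by rw [hwx, commutatorElement_def]; group
  rw [this]
  exact Subgroup.commutator_mem_commutator (Subgroup.mem_top _) (Subgroup.mem_top _)

theorem ker_transferFocal_lt_top (h : HasPGroupAutomizers p G) (P : Sylow p G)
    (hP : (P : Subgroup G) ≠ ⊥) : (P : Subgroup G).transferFocal.ker < ⊤ := by
  have : Nontrivial P := (Subgroup.nontrivial_iff_ne_bot _).mpr hP
  have : Group.IsNilpotent P := P.isPGroup'.isNilpotent
  have hlt : (P : Subgroup G).focalSubgroupOf < ⊤ :=
    (h.focalSubgroupOf_le_commutator P).trans_lt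
      (Group.IsSolvable.commutator_lt_top_of_nontrivial P)
  refine lt_top_iff_ne_top.mpr fun htop ↦ hlt.ne ?_
  rw [Subgroup.focalSubgroupOf_def, ← Subgroup.ker_transferFocal_inf_eq_focalSubgroup P, htop,
    top_inf_eq, Subgroup.subgroupOf_self]

end HasPGroupAutomizers

theorem isNilpotent_of_hasPGroupAutomizers {G : Type*} [Group G] [Finite G]
    (h : ∀ p, p.Prime → HasPGroupAutomizers p G) : Group.IsNilpotent G := by
  induction hn : Nat.card G using Nat.strong_induction_on generalizing G with | h n ih
  have sylow_normal {p r : ℕ} (hp : p.Prime) (hpG : p ∣ Nat.card G) (hr : r.Prime) (hrp : r ≠ p)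
      (R : Sylow r G) : (R : Subgroup G).Normal := by
    have : Fact p.Prime := ⟨hp⟩
    have : Fact r.Prime := ⟨hr⟩
    let P : Sylow p G := default
    let K := (P : Subgroup G).transferFocal.ker
    have hK : Nat.card K < n := by
      rw [← hn]
      exact K.card_le_card_group.lt_of_ne fun hcard ↦
        ((h p hp).ker_transferFocal_lt_top P (P.ne_bot_of_dvd_card hpG)).ne
          (K.eq_top_of_card_eq hcard)
    have : Group.IsNilpotent K := ih _ hK (fun q hq ↦ (h q hq).subgroup K) rfl
    exact sylow_normal_of_isPGroup_quotient hrp K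
      (((P.isPGroup'.to_quotient (P : Subgroup G).focalSubgroupOf)).of_equiv
        (Subgroup.transferFocal.quotientKerMulEquivQuotientFocalSubroupOf P).symm) R
  refine (Group.isNilpotent_of_finite_tfae.out 0 3).mpr fun r hr R ↦ ?_
  by_cases hp : ∃ p, p.Prime ∧ p ∣ Nat.card G ∧ r ≠ p
  · obtain ⟨p, hp, hpG, hrp⟩ := hp
    exact sylow_normal hp hpG hr.out hrp R
  · push Not at hp
    have : (R : Subgroup G) = ⊤ := subgroup_eq_top_of_forall_exists_sylow_le _ fun p hp' hpG ↦ by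
      obtain rfl := hp p hp' hpG
      exact ⟨R, le_rfl⟩
    rw [this]
    infer_instance

theorem exists_dvd_pow_sub_one_of_dvd_card_mulAut {Q : Type*} [Group Q] {p r a : ℕ}
    [Fact p.Prime] [Fact r.Prime] (hQ : Nat.card Q = p ^ a) (hrp : r ≠ p)
    (hr : r ∣ Nat.card (MulAut Q)) : ∃ k, 1 ≤ k ∧ k ≤ a ∧ r ∣ p ^ k - 1 := by
  have hp : p.Prime := Fact.out
  have : Finite Q := Nat.finite_of_card_ne_zero (hQ ▸ pow_ne_zero a hp.ne_zero)
  obtain ⟨φ, hφ⟩ := exists_prime_orderOf_dvd_card' r hr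
  have hφ1 : φ ≠ 1 := fun h ↦ (Fact.out : r.Prime).one_lt.ne' (by rw [← hφ, h, orderOf_one])
  let C := FixedPoints.subgroup (Subgroup.zpowers φ) Q
  obtain ⟨c, hca, hC⟩ := (Nat.dvd_prime_pow hp).mp (hQ ▸ C.card_subgroup_dvd_card)
  have hlt : c < a := by
    refine hca.lt_of_ne fun hcaeq ↦ hφ1 ?_
    have htop : C = ⊤ := C.eq_top_of_card_eq (by rw [hC, hQ, hcaeq])
    ext x
    exact htop.ge (Subgroup.mem_top x) ⟨φ, Subgroup.mem_zpowers φ⟩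
  have hmod : p ^ a ≡ p ^ c [MOD r] := by
    have hzpow : IsPGroup r (Subgroup.zpowers φ) :=
      IsPGroup.of_card (n := 1) (by rw [Nat.card_zpowers, hφ, pow_one])
    rw [← hQ, ← hC]
    exact hzpow.card_modEq_card_fixedPoints Q
  have hdvd : r ∣ p ^ c * (p ^ (a - c) - 1) := by
    have h := (Nat.modEq_iff_dvd' (Nat.pow_le_pow_right hp.pos hca)).mp hmod.symm
    rwa [Nat.mul_sub, mul_one, ← pow_add, Nat.add_sub_cancel' hca]
  have hcop : r.Coprime (p ^ c) :=
    ((Nat.coprime_primes Fact.out hp).mpr hrp).pow_right c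
  exact ⟨a - c, by lia, by lia, hcop.dvd_of_dvd_mul_left hdvd⟩

/-- Nilpotent numbers, in the form of Pakianathan and Shankar's criterion: no prime factor of `n`
divides `q ^ k - 1` for a power `q ^ k` of another prime with `k ≥ 1` and `q ^ k ∣ n`. -/
def IsNilpotentNumber (n : ℕ) : Prop :=
  ∀ p ∈ n.primeFactors, ∀ q ∈ n.primeFactors, p ≠ q →
    ∀ k : ℕ, 1 ≤ k → k ≤ n.factorization q → ¬ p ∣ q ^ k - 1

theorem IsNilpotentNumber.hasPGroupAutomizers {G : Type*} [Group G] [Finite G]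
    (h : IsNilpotentNumber (Nat.card G)) {p : ℕ} (hp : p.Prime) : HasPGroupAutomizers p G := by
  intro D hD
  have : Fact p.Prime := ⟨hp⟩
  obtain ⟨a, ha⟩ := IsPGroup.iff_card.mp hD
  have haG : a ≤ (Nat.card G).factorization p :=
    (hp.pow_dvd_iff_le_factorization Nat.card_pos.ne').mp (ha ▸ D.card_subgroup_dvd_card)
  rw [isPGroup_iff_primeFactors_card_subset hp.ne_zero, hp.primeFactors]
  intro r hr
  rw [Finset.mem_singleton]
  by_contra hrp
  obtain ⟨hr, hrR, -⟩ := Nat.mem_primeFactors.mp hr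
  have : Fact r.Prime := ⟨hr⟩
  have hrG : r ∣ Nat.card G :=
    hrR.trans ((Subgroup.card_range_dvd _).trans (Subgroup.card_subgroup_dvd_card _))
  obtain ⟨k, hk, hka, hdvd⟩ :=
    exists_dvd_pow_sub_one_of_dvd_card_mulAut ha hrp (hrR.trans (Subgroup.card_subgroup_dvd_card _))
  refine h r (Nat.mem_primeFactors.mpr ⟨hr, hrG, Nat.card_pos.ne'⟩) p ?_ hrp k hk
    (hka.trans haG) hdvd
  exact Nat.support_factorization (Nat.card G) ▸ Finsupp.mem_support_iff.mpr (by lia)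

theorem IsNilpotentNumber.isNilpotent {G : Type*} [Group G] [Finite G]
    (h : IsNilpotentNumber (Nat.card G)) : Group.IsNilpotent G :=
  isNilpotent_of_hasPGroupAutomizers fun _ hp ↦ h.hasPGroupAutomizers hp

section SemidirectProduct

variable {N G : Type*} [Group N] [Group G] {φ : G →* MulAut N}

theorem normal_map_inl_of_characteristic (P : Subgroup N) [hP : P.Characteristic] :
    (P.map SemidirectProduct.inl : Subgroup (N ⋊[φ] G)).Normal := by
  refine ⟨?_⟩
  rintro _ ⟨x, hx, rfl⟩ s
  have hconj : s * SemidirectProduct.inl x * s⁻¹ =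
      SemidirectProduct.inl (s.left * φ s.right x * s.left⁻¹) := by
    ext <;> simp
  rw [hconj]
  exact Subgroup.mem_map_of_mem _ (Subgroup.Normal.conj_mem inferInstance _
    (Subgroup.characteristic_iff_map_le.mp hP _ (Subgroup.mem_map_of_mem _ hx)) _)

theorem commute_of_mem_sylow_of_ne [Finite G] [Group.IsNilpotent G] {p q : ℕ} [Fact p.Prime]
    [Fact q.Prime] (hpq : p ≠ q) (P : Sylow p G) (Q : Sylow q G) {x y : G} (hx : x ∈ P)
    (hy : y ∈ Q) : Commute x y :=
  Subgroup.commute_of_normal_of_disjoint P Q inferInstance inferInstance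
    (IsPGroup.disjoint_of_ne p q hpq _ _ P.isPGroup' Q.isPGroup') x y hx hy

theorem le_centralizer_sup {H K L : Subgroup G} (hK : H ≤ Subgroup.centralizer (K : Set G))
    (hL : H ≤ Subgroup.centralizer (L : Set G)) :
    H ≤ Subgroup.centralizer ((K ⊔ L : Subgroup G) : Set G) :=
  Subgroup.le_centralizer_iff.mp
    (sup_le (Subgroup.le_centralizer_iff.mp hK) (Subgroup.le_centralizer_iff.mp hL))

theorem commute_of_mem_sup_map_inl_map_inr {P P' : Subgroup N} {Q Q' : Subgroup G}
    (hP : ∀ x ∈ P, ∀ x' ∈ P', Commute x x') (hQ : ∀ g ∈ Q, ∀ g' ∈ Q', Commute g g')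
    (hPQ' : ∀ x ∈ P, ∀ g' ∈ Q', φ g' x = x) (hQP' : ∀ g ∈ Q, ∀ x' ∈ P', φ g x' = x')
    {s t : N ⋊[φ] G} (hs : s ∈ P.map SemidirectProduct.inl ⊔ Q.map SemidirectProduct.inr)
    (ht : t ∈ P'.map SemidirectProduct.inl ⊔ Q'.map SemidirectProduct.inr) : Commute s t := by
  have hinl_inr {x : N} {g : G} (h : φ g x = x) :
      Commute (SemidirectProduct.inl x : N ⋊[φ] G) (SemidirectProduct.inr g) := by
    ext <;> simp [h]
  suffices h : P.map SemidirectProduct.inl ⊔ Q.map SemidirectProduct.inr ≤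
      Subgroup.centralizer (P'.map SemidirectProduct.inl ⊔ Q'.map SemidirectProduct.inr :
        Subgroup (N ⋊[φ] G)) from (h hs t ht).symm
  refine sup_le (le_centralizer_sup ?_ ?_) (le_centralizer_sup ?_ ?_)
  · rintro _ ⟨x, hx, rfl⟩ _ ⟨x', hx', rfl⟩
    exact ((hP x hx x' hx').map _).symm
  · rintro _ ⟨x, hx, rfl⟩ _ ⟨g', hg', rfl⟩
    exact (hinl_inr (hPQ' x hx g' hg')).symm
  · rintro _ ⟨g, hg, rfl⟩ _ ⟨x', hx', rfl⟩
    exact hinl_inr (hQP' g hg x' hx')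
  · rintro _ ⟨g, hg, rfl⟩ _ ⟨g', hg', rfl⟩
    exact ((hQ g hg g' hg').map _).symm

theorem isNilpotent_semidirectProduct [Finite N] [Finite G]
    [Group.IsNilpotent N] [Group.IsNilpotent G]
    (h : ∀ (p q : ℕ) [Fact p.Prime] [Fact q.Prime], p ≠ q → ∀ (P : Sylow p G) (Q : Sylow q N),
      ∀ g ∈ P, ∀ x ∈ Q, φ g x = x) : Group.IsNilpotent (N ⋊[φ] G) := by
  have : Finite (N ⋊[φ] G) := .of_equiv _ SemidirectProduct.equivProd.symm
  let ι := (Nat.card (N ⋊[φ] G)).primeFactors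
  have (p : ι) : Fact (p : ℕ).Prime := ⟨Nat.prime_of_mem_primeFactors p.2⟩
  let H (p : ι) : Subgroup (N ⋊[φ] G) :=
    ((default : Sylow p N) : Subgroup N).map SemidirectProduct.inl ⊔
      ((default : Sylow p G) : Subgroup G).map SemidirectProduct.inr
  have hH (p : ι) : Group.IsNilpotent (H p) := by
    have := (default : Sylow p N).characteristic_of_normal inferInstance
    have := normal_map_inl_of_characteristic (φ := φ) (default : Sylow p N).toSubgroup
    exact (((default : Sylow p N).isPGroup'.map _).to_sup_of_normal_left
      ((default : Sylow p G).isPGroup'.map _)).isNilpotent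
  have hcomm : Pairwise fun p q : ι ↦ ∀ s t, s ∈ H p → t ∈ H q → Commute s t := by
    intro p q hpq s t hs ht
    have hpq : (p : ℕ) ≠ q := Subtype.coe_ne_coe.mpr hpq
    exact commute_of_mem_sup_map_inl_map_inr
      (fun _ hx _ hx' ↦ commute_of_mem_sylow_of_ne hpq _ _ hx hx')
      (fun _ hg _ hg' ↦ commute_of_mem_sylow_of_ne hpq _ _ hg hg')
      (fun x hx g hg ↦ h q p hpq.symm _ _ g hg x hx) (fun g hg x hx ↦ h p q hpq _ _ g hg x hx) hs ht
  refine isNilpotent_of_iSup_eq_top_of_commute H hcomm ?_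
  have mem_ι {p : ℕ} (hp : p.Prime) (hdvd : p ∣ Nat.card N * Nat.card G) : p ∈ ι :=
    Nat.mem_primeFactors.mpr ⟨hp, SemidirectProduct.card (φ := φ) ▸ hdvd, Nat.card_pos.ne'⟩
  have hinl : (⨆ p, H p).comap SemidirectProduct.inl = ⊤ :=
    subgroup_eq_top_of_forall_exists_sylow_le _ fun p hp hdvd ↦
      ⟨default, Subgroup.map_le_iff_le_comap.mp
        (le_sup_left.trans (le_iSup H ⟨p, mem_ι hp (hdvd.mul_right _)⟩))⟩
  have hinr : (⨆ p, H p).comap SemidirectProduct.inr = ⊤ :=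
    subgroup_eq_top_of_forall_exists_sylow_le _ fun p hp hdvd ↦
      ⟨default, Subgroup.map_le_iff_le_comap.mp
        (le_sup_right.trans (le_iSup H ⟨p, mem_ι hp (hdvd.mul_left _)⟩))⟩
  refine eq_top_iff.mpr fun s _ ↦ ?_
  rw [← SemidirectProduct.inl_left_mul_inr_right s]
  exact mul_mem (hinl.ge (Subgroup.mem_top _)) (hinr.ge (Subgroup.mem_top _))

end SemidirectProduct

namespace SkewBrace

variable {A : Type*} [SkewBrace A]

theorem mul_zero_eq_self (a : A) : a * 0 = a := by
  have h := skew_left_distrib a 0 0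
  rw [add_zero, right_eq_add, sub_eq_zero] at h
  exact h

theorem zero_eq_one : (0 : A) = 1 := by
  rw [← one_mul (0 : A), mul_zero_eq_self]

theorem neg_one_add_one_mul (a : A) : -1 + 1 * a = a := by
  rw [one_mul, ← zero_eq_one, neg_zero, zero_add]

theorem neg_add_mul_add (a b c : A) : -a + a * (b + c) = (-a + a * b) + (-a + a * c) := by
  rw [skew_left_distrib, sub_eq_add_neg]
  simp only [add_assoc]

theorem mul_neg_eq (a b : A) : a * -b = a - a * b + a := by
  have h := skew_left_distrib a b (-b)
  rw [add_neg_cancel, mul_zero_eq_self] at h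
  rw [← neg_sub, eq_comm, neg_add_eq_iff_eq_add]
  exact h

theorem neg_mul_add_mul (a b c : A) : -(a * b) + a * b * c = -a + a * (-b + b * c) := by
  rw [skew_left_distrib, mul_neg_eq, mul_assoc]
  simp [sub_eq_add_neg, add_assoc]

/-- The `λ`-action `λ_a b = -a + a ∘ b` of `(A,∘)` on `(A,+)`. The additive group appears as
`Multiplicative A`, so that its automorphisms form a `MulAut` and semidirect products apply. -/
def lambda : A →* MulAut (Multiplicative A) where
  toFun a :=
    { toFun b := .ofAdd (-a + a * b.toAdd)
      invFun b := .ofAdd (-a⁻¹ + a⁻¹ * b.toAdd)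
      left_inv b := by
        simp only [toAdd_ofAdd, ← neg_mul_add_mul, inv_mul_cancel, neg_one_add_one_mul, ofAdd_toAdd]
      right_inv b := by
        simp only [toAdd_ofAdd, ← neg_mul_add_mul, mul_inv_cancel, neg_one_add_one_mul, ofAdd_toAdd]
      map_mul' b c := neg_add_mul_add a b.toAdd c.toAdd }
  map_one' := MulEquiv.ext fun b ↦ neg_one_add_one_mul b.toAdd
  map_mul' a b := MulEquiv.ext fun c ↦ neg_mul_add_mul a b c.toAdd

theorem ofAdd_mul (a b : A) :
    Multiplicative.ofAdd (a * b) = .ofAdd a * lambda a (.ofAdd b) :=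
  congrArg Multiplicative.ofAdd (add_neg_cancel_left a (a * b)).symm

theorem inl_star_eq_commutatorElement (a b : A) :
    (SemidirectProduct.inl (.ofAdd (-a + a * b - b)) : Multiplicative A ⋊[lambda] A) =
      ⁅(SemidirectProduct.inr a : Multiplicative A ⋊[lambda] A),
        (SemidirectProduct.inl (.ofAdd b) : Multiplicative A ⋊[lambda] A)⁆ := by
  rw [commutatorElement_def, ← map_inv SemidirectProduct.inr, ← SemidirectProduct.inl_aut,
    ← map_inv SemidirectProduct.inl, ← map_mul, sub_eq_add_neg]
  rfl

theorem inl_mem_lowerCentralSeries_of_mem_leftSeries {m : ℕ} {b : A} (hb : b ∈ leftSeries A m) :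
    SemidirectProduct.inl (.ofAdd b) ∈
      (⊤ : Subgroup (Multiplicative A ⋊[lambda] A)).lowerCentralSeries m := by
  induction m generalizing b with
  | zero => exact Subgroup.mem_top _
  | succ m ih =>
    rw [leftSeries] at hb
    induction hb using AddSubgroup.closure_induction with
    | mem x hx =>
      obtain ⟨a, b, hb, rfl⟩ := hx
      rw [inl_star_eq_commutatorElement, Subgroup.lowerCentralSeries_succ, Subgroup.commutator_comm]
      exact Subgroup.commutator_mem_commutator (Subgroup.mem_top _) (ih hb)
    | zero => exact one_mem _
    | add x y _ _ hx hy => rw [ofAdd_add, map_mul]; exact mul_mem hx hy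
    | neg x _ hx => rw [ofAdd_neg, map_inv]; exact inv_mem hx

theorem isLeftNilpotent_of_isNilpotent_semidirectProduct
    [h : Group.IsNilpotent (Multiplicative A ⋊[lambda] A)] : IsLeftNilpotent A := by
  obtain ⟨m, hm⟩ := Subgroup.nilpotent_iff_lowerCentralSeries.mp h
  refine ⟨m, (AddSubgroup.eq_bot_iff_forall _).mpr fun b hb ↦ ?_⟩
  have := inl_mem_lowerCentralSeries_of_mem_leftSeries hb
  rw [hm, Subgroup.mem_bot, ← map_one SemidirectProduct.inl,
    SemidirectProduct.inl_injective.eq_iff] at this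
  exact this

/-- A left ideal of `A`, that is, a subgroup of `(A,+)` stable under the `λ`-action, as a subgroup
of `(A,∘)`. -/
def mulSubgroupOfInvariant (P : Subgroup (Multiplicative A))
    (hP : ∀ a, ∀ b ∈ P, lambda a b ∈ P) : Subgroup A where
  carrier := {a | .ofAdd a ∈ P}
  one_mem' := by
    change .ofAdd (1 : A) ∈ P
    rw [← zero_eq_one]
    exact one_mem P
  mul_mem' {a b} ha hb := by
    change .ofAdd (a * b) ∈ P
    rw [ofAdd_mul]
    exact mul_mem ha (hP a _ hb)
  inv_mem' {a} ha := by
    have h := ofAdd_mul a⁻¹ a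
    rw [inv_mul_cancel, ← zero_eq_one, ofAdd_zero] at h
    change .ofAdd a⁻¹ ∈ P
    rw [eq_inv_of_mul_eq_one_left h.symm]
    exact inv_mem (hP _ _ ha)

variable [Finite A] [Group.IsNilpotent (Multiplicative A)]

theorem lambda_mem_sylow {p : ℕ} [Fact p.Prime] (P : Sylow p (Multiplicative A)) (a : A)
    {b : Multiplicative A} (hb : b ∈ P) : lambda a b ∈ P :=
  Subgroup.characteristic_iff_map_le.mp (P.characteristic_of_normal inferInstance) (lambda a)
    (Subgroup.mem_map_of_mem _ hb)

variable [Group.IsNilpotent A]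

theorem ofAdd_mem_sylow_iff {p : ℕ} [Fact p.Prime] (P : Sylow p (Multiplicative A)) (R : Sylow p A)
    {a : A} : Multiplicative.ofAdd a ∈ P ↔ a ∈ R := by
  let H : Subgroup A := mulSubgroupOfInvariant P fun a b hb ↦ lambda_mem_sylow P a hb
  have hH : Nat.card H = p ^ (Nat.card A).factorization p := P.card_eq_multiplicity
  have := R.unique_of_normal inferInstance
  rw [Subsingleton.elim R (Sylow.ofCard H hH)]
  rfl

theorem lambda_apply_eq_self {p q : ℕ} [Fact p.Prime] [Fact q.Prime] (hpq : p ≠ q)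
    (P : Sylow p A) (Q : Sylow q (Multiplicative A)) {a : A} (ha : a ∈ P) {b : Multiplicative A}
    (hb : b ∈ Q) : lambda a b = b := by
  obtain ⟨b, rfl⟩ := Multiplicative.ofAdd.surjective b
  let P' : Sylow p (Multiplicative A) := default
  let Q' : Sylow q A := default
  have ha' : .ofAdd a ∈ P' := (ofAdd_mem_sylow_iff P' P).mpr ha
  have hb' : b ∈ Q' := (ofAdd_mem_sylow_iff Q Q').mp hb
  have hab : lambda a (.ofAdd b) ∈ Q := lambda_mem_sylow Q a hb
  have hba : lambda b (.ofAdd a) ∈ P' := lambda_mem_sylow P' b ha'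
  -- `-b + λ_a b = λ_b a - a` lies both in a `q`-group and in a `p`-group.
  have heq : (.ofAdd b)⁻¹ * lambda a (.ofAdd b) = lambda b (.ofAdd a) * (.ofAdd a)⁻¹ := by
    rw [inv_mul_eq_iff_eq_mul, ← mul_assoc, eq_mul_inv_iff_mul_eq, ← ofAdd_mul,
      ← (commute_of_mem_sylow_of_ne hpq P Q' ha hb').eq, ofAdd_mul]
    exact (commute_of_mem_sylow_of_ne hpq P' Q ha' hab).symm.eq
  have hone : (.ofAdd b)⁻¹ * lambda a (.ofAdd b) = 1 :=
    (Subgroup.disjoint_def.mp (IsPGroup.disjoint_of_ne p q hpq _ _ P'.isPGroup' Q.isPGroup'))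
      (heq ▸ mul_mem hba (inv_mem ha')) (mul_mem (inv_mem hb) hab)
  exact (inv_mul_eq_one.mp hone).symm

variable (A) in
theorem isLeftNilpotent_of_isNilpotent : IsLeftNilpotent A := by
  have : Group.IsNilpotent (Multiplicative A ⋊[lambda] A) :=
    isNilpotent_semidirectProduct fun p q _ _ hpq P Q _ ha _ hb ↦
      lambda_apply_eq_self hpq P Q ha hb
  exact isLeftNilpotent_of_isNilpotent_semidirectProduct

variable {N H : Type*} [Group N] [Group H] (φ : H →* MulAut N)

/-- The skew brace whose multiplicative group is `N ⋊[φ] H` and whose additive group is the direct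
product `N × H`, carried over along the underlying bijection. -/
abbrev ofSemidirectProduct : SkewBrace (N ⋊[φ] H) where
  __ := (SemidirectProduct.equivProd.trans Additive.ofMul).addGroup
  __ := (inferInstance : Group (N ⋊[φ] H))
  skew_left_distrib a b c := by
    refine SemidirectProduct.ext ?_ ?_
    · change a.left * φ a.right (b.left * c.left) =
        a.left * φ a.right b.left / a.left * (a.left * φ a.right c.left)
      rw [map_mul, ← mul_assoc, ← mul_assoc, div_mul_cancel]
    · change a.right * (b.right * c.right) = a.right * b.right / a.right * (a.right * c.right)
      rw [← mul_assoc, ← mul_assoc, div_mul_cancel]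

variable {φ}

theorem ofSemidirectProduct_star_inl (h : H) (x : N) :
    letI := ofSemidirectProduct φ
    (-SemidirectProduct.inr h + SemidirectProduct.inr h * SemidirectProduct.inl x -
      SemidirectProduct.inl x : N ⋊[φ] H) = SemidirectProduct.inl (φ h x / x) := by
  refine SemidirectProduct.ext ?_ ?_
  · change (1⁻¹ * (1 * φ h x)) / x = φ h x / x
    rw [inv_one, one_mul, one_mul]
  · change h⁻¹ * (h * 1) / 1 = 1
    rw [mul_one, inv_mul_cancel, div_one]

theorem inl_mem_leftSeries_ofSemidirectProduct [Finite N] {h : H}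
    (hφ : MonoidHom.FixedPointFree (φ h)) (m : ℕ) (x : N) :
    SemidirectProduct.inl x ∈ @leftSeries (N ⋊[φ] H) (ofSemidirectProduct φ) m := by
  let := ofSemidirectProduct φ
  induction m generalizing x with
  | zero => exact AddSubgroup.mem_top _
  | succ m ih =>
    obtain ⟨y, hy⟩ := hφ.commutatorMap_surjective x⁻¹
    rw [← inv_inv x, ← hy, MonoidHom.commutatorMap_apply, inv_div,
      ← ofSemidirectProduct_star_inl]
    exact AddSubgroup.subset_closure ⟨_, _, ih y, rfl⟩

theorem not_isLeftNilpotent_ofSemidirectProduct [Finite N] [Nontrivial N] {h : H}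
    (hφ : MonoidHom.FixedPointFree (φ h)) :
    ¬ @IsLeftNilpotent (N ⋊[φ] H) (ofSemidirectProduct φ) := by
  let := ofSemidirectProduct φ
  rintro ⟨m, hm⟩
  obtain ⟨x, hx⟩ := exists_ne (1 : N)
  have hmem := inl_mem_leftSeries_ofSemidirectProduct hφ m x
  rw [hm, AddSubgroup.mem_bot] at hmem
  exact hx (congrArg SemidirectProduct.left hmem)

end SkewBrace

theorem exists_fixedPointFree_mulAut_of_dvd {p q k : ℕ} [Fact p.Prime] [Fact q.Prime]
    (hk : k ≠ 0) (hdvd : p ∣ q ^ k - 1) :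
    ∃ (N : Type) (_ : Group N) (φ : MulAut N), Nat.card N = q ^ k ∧ orderOf φ = p ∧
      MonoidHom.FixedPointFree φ := by
  let F := GaloisField q k
  have hcard : Nat.card F = q ^ k := GaloisField.card q k hk
  have : Finite F := Nat.finite_of_card_ne_zero (hcard ▸ pow_ne_zero k (Fact.out : q.Prime).ne_zero)
  obtain ⟨u, hu⟩ := exists_prime_orderOf_dvd_card' (G := Fˣ) p (by rwa [Nat.card_units, hcard])
  let f := (MulAutMultiplicative F).symm.toMonoidHom.comp AddAut.mulLeft
  have hf (a : Fˣ) (x : F) : f a (.ofAdd x) = .ofAdd (a * x) := rfl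
  have hinj : Function.Injective f := fun a b hab ↦ Units.ext <| by
    simpa [hf] using DFunLike.congr_fun hab (.ofAdd 1)
  refine ⟨Multiplicative F, inferInstance, f u, hcard, by rw [orderOf_injective f hinj, hu], ?_⟩
  intro x hx
  have hu1 : (u : F) ≠ 1 := fun h ↦ by
    rw [Units.val_eq_one.mp h, orderOf_one] at hu
    exact (Fact.out : p.Prime).one_lt.ne hu
  have : (u - 1) * x.toAdd = 0 := by
    rw [sub_mul, one_mul, sub_eq_zero]
    exact hx
  exact (mul_eq_zero.mp this).resolve_left (sub_ne_zero.mpr hu1)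

theorem exists_not_isLeftNilpotent {n p q k : ℕ} (hn : n ≠ 0) (hp : p.Prime) (hq : q.Prime)
    (hpq : p ≠ q) (hpn : p ∣ n) (hqn : q ^ k ∣ n) (hk : k ≠ 0) (hdvd : p ∣ q ^ k - 1) :
    ∃ (A : Type) (_ : Finite A) (_ : SkewBrace A), Nat.card A = n ∧ ¬ IsLeftNilpotent A := by
  have : Fact p.Prime := ⟨hp⟩
  have : Fact q.Prime := ⟨hq⟩
  have hcop : (q ^ k).Coprime p := ((Nat.coprime_primes hq hp).mpr hpq.symm).pow_left k
  obtain ⟨m, hm⟩ := hcop.mul_dvd_of_dvd_of_dvd hqn hpn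
  obtain ⟨N, _, α, hN, hα, hfree⟩ := exists_fixedPointFree_mulAut_of_dvd hk hdvd
  let φ : Subgroup.zpowers α × Multiplicative (ZMod m) →* MulAut N :=
    (Subgroup.zpowers α).subtype.comp (MonoidHom.fst _ _)
  have hcard : Nat.card (N ⋊[φ] (Subgroup.zpowers α × Multiplicative (ZMod m))) = n := by
    rw [SemidirectProduct.card, Nat.card_prod, hN, Nat.card_zpowers, hα,
      Nat.card_congr Multiplicative.toAdd, Nat.card_zmod, ← mul_assoc, hm]
  have : Finite N := Nat.finite_of_card_ne_zero (hN ▸ pow_ne_zero k hq.ne_zero)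
  have : Nontrivial N := Finite.one_lt_card_iff_nontrivial.mp (hN ▸ Nat.one_lt_pow hk hq.one_lt)
  exact ⟨_, Nat.finite_of_card_ne_zero (hcard ▸ hn), .ofSemidirectProduct φ, hcard,
    SkewBrace.not_isLeftNilpotent_ofSemidirectProduct (h := (⟨α, Subgroup.mem_zpowers α⟩, 1)) hfree⟩

/-- Every skew brace of order `n` is left-nilpotent iff `p ∤ q^k - 1` for all
distinct primes `p, q` dividing `n` and all `1 ≤ k ≤ α_q`. -/
theorem every_skewBrace_is_left_nilpotent_iff (n : ℕ) (hn : 0 < n) :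
    (∀ (A : Type) [Fintype A] [SkewBrace A], Fintype.card A = n →
      IsLeftNilpotent A) ↔
    (∀ p ∈ n.primeFactors, ∀ q ∈ n.primeFactors, p ≠ q →
      ∀ k : ℕ, 1 ≤ k → k ≤ n.factorization q → ¬ p ∣ q ^ k - 1) := by
  constructor
  · intro h p hp q hq hpq k hk hkn hdvd
    have hqn : q ^ k ∣ n :=
      ((Nat.prime_of_mem_primeFactors hq).pow_dvd_iff_le_factorization hn.ne').mpr hkn
    obtain ⟨A, _, _, hcard, hA⟩ := exists_not_isLeftNilpotent hn.ne'
      (Nat.prime_of_mem_primeFactors hp) (Nat.prime_of_mem_primeFactors hq) hpq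
      (Nat.dvd_of_mem_primeFactors hp) hqn (Nat.one_le_iff_ne_zero.mp hk) hdvd
    have := Fintype.ofFinite A
    exact hA (h A (Nat.card_eq_fintype_card.symm.trans hcard))
  · intro h A _ _ hcard
    have hA : IsNilpotentNumber (Nat.card A) := by
      rw [Nat.card_eq_fintype_card, hcard]
      exact h
    have : Group.IsNilpotent A := hA.isNilpotent
    have : Group.IsNilpotent (Multiplicative A) := IsNilpotentNumber.isNilpotent hA
    exact SkewBrace.isLeftNilpotent_of_isNilpotent A
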